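/- Suppose 𝒬 = conv{0, e₁, …, e_N, k·𝟙}, where e₁,…,e_N is the standard basis of ℝ^N, 𝟙 = (1,…,1), and k > 0. Then for any optimal feasible price schedule p: (1) if 1/N ≤ k < 1, then each of the bundles e₁, …, e_N is pooling, i.e., each D(e_n) has positive measure under f(x)dx; (2) if k > 1/N, then the bundle k·𝟙 is pooling, i.e., D(k·𝟙) has positive measure under f(x)dx. -/

import Mathlib

open MeasureTheory Set

noncomputable section

namespace Stmt14

variable {N : ℕ}

/-- Dot product on `ℝ^N`. -/
def dot (x q : Fin N → ℝ) : ℝ := ∑ n, x n * q n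

/-- The box `[a,b]^N`. -/
def box (a b : ℝ) : Set (Fin N → ℝ) := Icc (fun _ => a) (fun _ => b)

/-- `φ(x) = x·∇f(x) + (N+1)·f(x)`. -/
def phi (f : (Fin N → ℝ) → ℝ) (x : Fin N → ℝ) : ℝ :=
  (∑ n, x n * fderiv ℝ f x (Pi.single n 1)) + (N + 1) * f x

/-- The boundary integral `∫_{[x̲,x̄]^{N−1}} 1_A(ι_n^c(y)) f(ι_n^c(y)) dy`, written as an
integral over the full box divided by the length of the redundant coordinate. -/
def bInt (xl xu : ℝ) (f : (Fin N → ℝ) → ℝ) (n : Fin N) (c : ℝ) (A : Set (Fin N → ℝ)) : ℝ :=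
  (xu - xl)⁻¹ *
    ∫ y in box xl xu, A.indicator f (Function.update y n c)

/-- The transformed measure `μ` of the type distribution, as a set function:
`μ(A) = Σₙ (x̄·∫ 1_A(ι_n^{x̄}) f − x̲·∫ 1_A(ι_n^{x̲}) f) − ∫_{A} φ`. -/
def mu (xl xu : ℝ) (f : (Fin N → ℝ) → ℝ) (A : Set (Fin N → ℝ)) : ℝ :=
  (∑ n, (xu * bInt xl xu f n xu A - xl * bInt xl xu f n xl A)) -
    ∫ x in A ∩ box xl xu, phi f x

/-- The indirect utility `u_p(x) = sup_{q ∈ Q} (x·q − p(q))`. -/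
def indirect (Q : Set (Fin N → ℝ)) (p : (Fin N → ℝ) → ℝ) (x : Fin N → ℝ) : ℝ :=
  sSup ((fun q => dot x q - p q) '' Q)

/-- The lower convex envelope `p̄(q) = sup_{x ∈ X} (x·q − u_p(x))`. -/
def envelope (X Q : Set (Fin N → ℝ)) (p : (Fin N → ℝ) → ℝ) (q : Fin N → ℝ) : ℝ :=
  sSup ((fun x => dot x q - indirect Q p x) '' X)

/-- The demand set of a bundle `q`. -/
def demandSet (X Q : Set (Fin N → ℝ)) (p : (Fin N → ℝ) → ℝ) (q : Fin N → ℝ) :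
    Set (Fin N → ℝ) :=
  {x ∈ X | ∀ q' ∈ Q, dot x q' - envelope X Q p q' ≤ dot x q - envelope X Q p q}

/-- A feasible price schedule: bounded below, with the zero bundle priced at zero. -/
def Feasible (Q : Set (Fin N → ℝ)) (p : (Fin N → ℝ) → ℝ) : Prop :=
  BddBelow (p '' Q) ∧ p 0 = 0

/-- The seller's revenue `∫_X u_p dμ`. -/
def TR (xl xu : ℝ) (f : (Fin N → ℝ) → ℝ) (Q : Set (Fin N → ℝ))
    (p : (Fin N → ℝ) → ℝ) : ℝ :=
  (∑ n, (xu - xl)⁻¹ *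
    (xu * ∫ y in box xl xu,
            indirect Q p (Function.update y n xu) * f (Function.update y n xu)
     - xl * ∫ y in box xl xu,
            indirect Q p (Function.update y n xl) * f (Function.update y n xl)))
  - ∫ x in box xl xu, indirect Q p x * phi f x

/-- A price schedule is optimal if it is feasible and maximizes `∫_X u_p dμ` among
feasible price schedules. -/
def Optimal (xl xu : ℝ) (f : (Fin N → ℝ) → ℝ) (Q : Set (Fin N → ℝ))
    (p : (Fin N → ℝ) → ℝ) : Prop :=
  Feasible Q p ∧ ∀ p', Feasible Q p' → TR xl xu f Q p' ≤ TR xl xu f Q p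

/-- The maintained assumptions on the type density `f` on `X = [x̲,x̄]^N`. -/
def DensityHyp (xl xu : ℝ) (f : (Fin N → ℝ) → ℝ) : Prop :=
  (∀ x, 0 ≤ f x) ∧ (∫ x in box xl xu, f x = 1) ∧
  ContinuousOn f (box xl xu) ∧ ContDiffOn ℝ 1 f (interior (box xl xu)) ∧
  (∀ x ∈ frontier (box xl xu), 0 < f x) ∧
  (∃ M : ℝ, ∀ x ∈ interior (box xl xu), |phi f x| ≤ M)

/-- The maintained assumptions on the allocation space `𝒬`. -/
def QHyp (Q : Set (Fin N → ℝ)) : Prop :=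
  Convex ℝ Q ∧ IsCompact Q ∧ (∀ q ∈ Q, ∀ n, 0 ≤ q n) ∧
  (interior Q).Nonempty ∧ (0 : Fin N → ℝ) ∈ Q

/-- The measure with density `f` (the buyers' type distribution). -/
def muF (f : (Fin N → ℝ) → ℝ) : Measure (Fin N → ℝ) :=
  volume.withDensity fun x => ENNReal.ofReal (f x)

end Stmt14

namespace Stmt14

variable {N : ℕ}

/-- The allocation space `𝒬 = conv{0, e₁, …, e_N, k·𝟙}`. -/
def Qk (N : ℕ) (k : ℝ) : Set (Fin N → ℝ) :=
  convexHull ℝ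
    (insert (0 : Fin N → ℝ)
      (Set.range (fun n : Fin N => Pi.single n (1 : ℝ)) ∪ {fun _ => k}))

open Filter Function Topology

/-!
Suppose that `q` is bought by almost nobody. Lower its price to a level `c` slightly below its
envelope. The utility of `x` then rises by the bump `g x = max 0 (r x - c)`, where `r x` is the
reservation price of `x` for `q`. The envelope is the maximum of `r`, and every type at which `r`
attains it demands `q`. In a direction `v` of the normal cone of `𝒬` at `q`, the value of `q`
grows at least as fast as the utility, so `r` and `g` increase along `v`; if `v` is interior to
the cone and a maximizer of `r` can move inside the box along `v`, then a whole neighbourhood of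
its exit point demands `q`. Hence all maximizers of `r` sit where `v` leaves the box, and for `c`
close to the envelope `g` lives in a thin layer below the upper faces. There the positive boundary
part of `μ` outweighs the interior part, because the integral of `g` over the layer is at most the
thickness of the layer times the flux of `g` through the upper faces. So `∫ g dμ > 0`,
contradicting optimality.

For `e_n` take `v = e_n`, and for `k·𝟙` take `v = 𝟙`.
-/

section ConvexMeasure

variable {E : Type*} [NormedAddCommGroup E] [NormedSpace ℝ E] [MeasurableSpace E]

lemma measure_inter_pos_of_mem_nhds_of_convex (μ : Measure E) [μ.IsOpenPosMeasure]
    {s U : Set E} (hs : Convex ℝ s) (hs' : (interior s).Nonempty) {z : E} (hz : z ∈ s)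
    (hU : U ∈ 𝓝 z) : 0 < μ (U ∩ s) := by
  have hcl : z ∈ closure (interior s) :=
    hs.closure_interior_eq_closure_of_nonempty_interior hs' ▸ subset_closure hz
  obtain ⟨w, hwU, hws⟩ := mem_closure_iff_nhds.1 hcl (interior U) (interior_mem_nhds.2 hU)
  calc 0 < μ (interior U ∩ interior s) :=
        (isOpen_interior.inter isOpen_interior).measure_pos μ ⟨w, hwU, hws⟩
    _ ≤ μ (U ∩ s) := measure_mono (inter_subset_inter interior_subset interior_subset)

variable [BorelSpace E]

lemma setIntegral_pos_of_convex (μ : Measure E) [μ.IsOpenPosMeasure]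
    [IsFiniteMeasureOnCompacts μ] {s : Set E} (hs : Convex ℝ s) (hs' : (interior s).Nonempty)
    (hsc : IsCompact s) {g : E → ℝ} (hg : Continuous g) (hg0 : 0 ≤ g) {z : E} (hz : z ∈ s)
    (hgz : 0 < g z) : 0 < ∫ x in s, g x ∂μ := by
  rw [setIntegral_pos_iff_support_of_nonneg_ae (ae_of_all _ hg0)
    (hg.continuousOn.integrableOn_compact hsc)]
  exact measure_inter_pos_of_mem_nhds_of_convex μ hs hs' hz
    (hg.isOpen_support.mem_nhds hgz.ne')

lemma measurePreserving_transvection [FiniteDimensional ℝ E] (μ : Measure E) [μ.IsAddHaarMeasure]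
    {ℓ : Module.Dual ℝ E} {v : E} (h : ℓ v = 0) :
    MeasurePreserving (LinearMap.transvection ℓ v) μ μ := by
  have hdet : (LinearMap.transvection ℓ v).det = 1 := by
    rw [LinearMap.transvection.det, h, add_zero]
  refine ⟨(LinearMap.continuous_of_finiteDimensional _).measurable, ?_⟩
  rw [Measure.map_linearMap_addHaar_eq_smul_addHaar μ (by simp [hdet])]
  simp [hdet]

end ConvexMeasure

lemma integral_pi_comp_update {α : Type*} [MeasurableSpace α] (μ : Fin N → Measure α)
    [∀ i, SigmaFinite (μ i)] (ν : Measure α) [SigmaFinite ν] (n : Fin N) (c : α)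
    (h : (Fin N → α) → ℝ) :
    (μ n).real univ * ∫ y, h (update y n c) ∂Measure.pi (update μ n ν) =
      ν.real univ * ∫ y, h (update y n c) ∂Measure.pi μ := by
  obtain ⟨M, rfl⟩ : ∃ M, N = M + 1 := Nat.exists_eq_succ_of_ne_zero (Fin.pos n).ne'
  have factor (ρ : Fin (M + 1) → Measure α) [∀ i, SigmaFinite (ρ i)] :
      ∫ y, h (update y n c) ∂Measure.pi ρ =
        (ρ n).real univ * ∫ z, h (n.insertNth c z) ∂Measure.pi fun j => ρ (n.succAbove j) := by
    rw [← smul_eq_mul, ← integral_fun_snd,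
      ← (measurePreserving_piFinSuccAbove ρ n).integral_comp']
    simp
  have (i : Fin (M + 1)) : SigmaFinite (update μ n ν i) := by
    rcases eq_or_ne i n with rfl | hi
    · rwa [update_self]
    · rw [update_of_ne hi]
      infer_instance
  simp only [factor, update_self, update_of_ne (Fin.succAbove_ne n _)]
  ring

section Box

variable {a b : ℝ}

lemma mem_box {x : Fin N → ℝ} : x ∈ box a b ↔ ∀ n, x n ∈ Icc a b := by
  simp only [box, mem_Icc, Pi.le_def, forall_and]

lemma box_eq_pi : (box a b : Set (Fin N → ℝ)) = univ.pi fun _ => Icc a b :=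
  (pi_univ_Icc _ _).symm

lemma isCompact_box : IsCompact (box a b : Set (Fin N → ℝ)) := isCompact_Icc

lemma measurableSet_box : MeasurableSet (box a b : Set (Fin N → ℝ)) := measurableSet_Icc

lemma convex_box : Convex ℝ (box a b : Set (Fin N → ℝ)) := convex_Icc _ _

lemma interior_box : interior (box a b : Set (Fin N → ℝ)) = univ.pi fun _ => Ioo a b := by
  simp only [box_eq_pi, interior_pi_set finite_univ, interior_Icc]

lemma nonempty_interior_box (hab : a < b) : (interior (box a b : Set (Fin N → ℝ))).Nonempty := by
  simp only [interior_box, univ_pi_nonempty_iff, nonempty_Ioo, hab, implies_true]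

lemma mem_frontier_box_of_eq_right {x : Fin N → ℝ} (hx : x ∈ box a b) {n : Fin N}
    (hn : x n = b) : x ∈ frontier (box a b) := by
  refine ⟨subset_closure hx, fun h => ?_⟩
  rw [interior_box] at h
  exact (h n (mem_univ n)).2.ne hn

lemma update_mem_box {y : Fin N → ℝ} (hy : y ∈ box a b) (n : Fin N) {c : ℝ} (hc : c ∈ Icc a b) :
    update y n c ∈ box a b := by
  rw [box_eq_pi] at hy ⊢
  exact update_mem_pi_iff_of_mem hy |>.2 fun _ => hc

lemma restrict_interior_box :
    (volume : Measure (Fin N → ℝ)).restrict (interior (box a b)) = volume.restrict (box a b) :=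
  Measure.restrict_congr_set (interior_ae_eq_of_null_frontier (convex_box.addHaar_frontier volume))

lemma exists_add_smul_mem_upper_face [Nonempty (Fin N)] {v x : Fin N → ℝ} (hv : ∀ n, 0 < v n)
    (hx : x ∈ box a b) : ∃ n, x + ((b - x n) / v n) • v ∈ box a b := by
  obtain ⟨n, hn⟩ := Finite.exists_min fun n => (b - x n) / v n
  have ht : 0 ≤ (b - x n) / v n := div_nonneg (sub_nonneg.2 (mem_box.1 hx n).2) (hv n).le
  refine ⟨n, mem_box.2 fun m => ⟨?_, ?_⟩⟩ <;> simp only [Pi.add_apply, Pi.smul_apply, smul_eq_mul]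
  · linarith [(mem_box.1 hx m).1, mul_nonneg ht (hv m).le]
  · linarith [(le_div_iff₀ (hv m)).1 (hn m)]

/-- The integral of `h` over the face of `[a,b]^N` on which the `n`-th coordinate is `c`, encoded
as in `bInt` by integrating over the redundant coordinate and dividing by its length. -/
def faceIntegral (a b : ℝ) (n : Fin N) (c : ℝ) (h : (Fin N → ℝ) → ℝ) : ℝ :=
  (b - a)⁻¹ * ∫ y in box a b, h (update y n c)

lemma continuousOn_comp_update {h : (Fin N → ℝ) → ℝ} (hh : ContinuousOn h (box a b)) (n : Fin N)
    {c : ℝ} (hc : c ∈ Icc a b) : ContinuousOn (fun y => h (update y n c)) (box a b) :=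
  hh.comp (continuous_id.update n continuous_const).continuousOn
    fun _ hy => update_mem_box hy n hc

lemma faceIntegral_mono {g h : (Fin N → ℝ) → ℝ} (hg : ContinuousOn g (box a b))
    (hh : ContinuousOn h (box a b)) (n : Fin N) {c : ℝ} (hc : c ∈ Icc a b)
    (hgh : ∀ x ∈ box a b, x n = c → g x ≤ h x) :
    faceIntegral a b n c g ≤ faceIntegral a b n c h :=
  mul_le_mul_of_nonneg_left
    (setIntegral_mono_on ((continuousOn_comp_update hg n hc).integrableOn_compact isCompact_box)
      ((continuousOn_comp_update hh n hc).integrableOn_compact isCompact_box) measurableSet_box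
      fun y hy => hgh _ (update_mem_box hy n hc) (update_self n c y))
    (inv_nonneg.2 (sub_nonneg.2 (hc.1.trans hc.2)))

lemma faceIntegral_add {g h : (Fin N → ℝ) → ℝ} (hg : ContinuousOn g (box a b))
    (hh : ContinuousOn h (box a b)) (n : Fin N) {c : ℝ} (hc : c ∈ Icc a b) :
    faceIntegral a b n c (fun x => g x + h x) =
      faceIntegral a b n c g + faceIntegral a b n c h := by
  simp only [faceIntegral]
  rw [integral_add ((continuousOn_comp_update hg n hc).integrableOn_compact isCompact_box)
    ((continuousOn_comp_update hh n hc).integrableOn_compact isCompact_box), mul_add]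

/-- The box `[a,b]^N` with its `n`-th edge replaced by `[b-l,b]`: the layer of thickness `l` below
the upper face `x n = b`. -/
def slab (a b : ℝ) (n : Fin N) (l : ℝ) : Set (Fin N → ℝ) :=
  univ.pi (update (fun _ => Icc a b) n (Icc (b - l) b))

lemma isCompact_slab (n : Fin N) (l : ℝ) : IsCompact (slab a b n l) := by
  refine isCompact_univ_pi fun m => ?_
  rcases eq_or_ne m n with rfl | hm
  · simpa only [update_self] using isCompact_Icc
  · simpa only [update_of_ne hm] using isCompact_Icc

lemma setIntegral_slab_comp_update (hab : a < b) (n : Fin N) {l : ℝ} (hl : 0 ≤ l) (c : ℝ)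
    (h : (Fin N → ℝ) → ℝ) :
    ∫ y in slab a b n l, h (update y n c) = l * faceIntegral a b n c h := by
  have hres : (fun i => (volume : Measure ℝ).restrict (update (fun _ => Icc a b) n
      (Icc (b - l) b) i)) =
      update (fun _ => volume.restrict (Icc a b)) n (volume.restrict (Icc (b - l) b)) := by
    ext1 i
    exact (apply_update (fun _ => (volume : Measure ℝ).restrict) (fun _ => Icc a b) n _ i)
  have key := integral_pi_comp_update (fun _ => (volume : Measure ℝ).restrict (Icc a b))
    (volume.restrict (Icc (b - l) b)) n c h
  rw [← hres, ← Measure.restrict_pi_pi, ← Measure.restrict_pi_pi, ← box_eq_pi,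
    ← volume_pi] at key
  simp only [measureReal_restrict_apply_univ, Real.volume_real_Icc, sub_sub_cancel, max_eq_left hl,
    max_eq_left (sub_nonneg.2 hab.le)] at key
  rw [faceIntegral, mul_left_comm, ← key, inv_mul_cancel_left₀ (sub_pos.2 hab).ne', slab]

/-- The shear that moves `x` in direction `v` until it reaches the hyperplane `x n = b`, except
that the `n`-th coordinate is left unchanged. -/
def shear (v : Fin N → ℝ) (b : ℝ) (n : Fin N) (x : Fin N → ℝ) : Fin N → ℝ :=
  update (x + ((b - x n) / v n) • v) n (x n)

lemma measurePreserving_shear (v : Fin N → ℝ) (b : ℝ) (n : Fin N) :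
    MeasurePreserving (shear v b n) := by
  have hlin := measurePreserving_transvection (volume : Measure (Fin N → ℝ))
    (ℓ := LinearMap.proj n) (v := -(v n)⁻¹ • update v n 0) (by simp)
  have hshear : shear v b n = (fun x => x + (b / v n) • update v n 0) ∘
      LinearMap.transvection (LinearMap.proj n) (-(v n)⁻¹ • update v n 0) := by
    ext x m
    rcases eq_or_ne m n with rfl | hm
    · simp [shear, LinearMap.transvection.apply]
    · simp only [shear, LinearMap.transvection.apply, LinearMap.proj_apply, comp_apply,
        Pi.add_apply, Pi.smul_apply, update_of_ne hm, smul_eq_mul]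
      ring
  exact hshear ▸ (measurePreserving_add_right volume _).comp hlin

lemma update_shear (v : Fin N → ℝ) (b : ℝ) {n : Fin N} (hn : v n ≠ 0) (x : Fin N → ℝ) :
    update (shear v b n x) n b = x + ((b - x n) / v n) • v := by
  rw [shear, update_idem, update_eq_self_iff]
  simp only [Pi.add_apply, Pi.smul_apply, smul_eq_mul, div_mul_cancel₀ _ hn, add_sub_cancel]

lemma exists_shear_mem_slab {v x : Fin N → ℝ} (hv : ∀ n, 0 < v n) {δ : ℝ} (hδ : 0 ≤ δ)
    (hx : x ∈ box a b) (hxδ : x + δ • v ∉ box a b) :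
    ∃ n, shear v b n x ∈ slab a b n (δ * v n) := by
  obtain ⟨m, -⟩ : ∃ m, (x + δ • v) m ∉ Icc a b := by simpa only [mem_box, not_forall] using hxδ
  obtain ⟨n, hn⟩ := haveI : Nonempty (Fin N) := ⟨m⟩; exists_add_smul_mem_upper_face hv hx
  have ht : (b - x n) / v n ≤ δ := by
    by_contra! hlt
    refine hxδ (mem_box.2 fun i => ⟨?_, ?_⟩) <;>
      simp only [Pi.add_apply, Pi.smul_apply, smul_eq_mul]
    · linarith [(mem_box.1 hx i).1, mul_nonneg hδ (hv i).le]
    · have := (mem_box.1 hn i).2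
      simp only [Pi.add_apply, Pi.smul_apply, smul_eq_mul] at this
      linarith [mul_le_mul_of_nonneg_right hlt.le (hv i).le]
  refine ⟨n, fun i _ => ?_⟩
  rcases eq_or_ne i n with rfl | hi
  · rw [shear, update_self, update_self]
    exact ⟨by linarith [(div_le_iff₀ (hv i)).1 ht], (mem_box.1 hx i).2⟩
  · rw [shear, update_of_ne hi, update_of_ne hi]
    exact mem_box.1 hn i

lemma integrable_indicator_slab {g : (Fin N → ℝ) → ℝ} (hg : Continuous g) (n : Fin N) (l c : ℝ) :
    Integrable ((slab a b n l).indicator fun y => g (update y n c)) :=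
  ((hg.comp (continuous_id.update n continuous_const)).continuousOn.integrableOn_compact
    (isCompact_slab n l)).integrable_indicator (isCompact_slab n l).measurableSet

lemma integral_indicator_slab_comp_shear (hab : a < b) {g : (Fin N → ℝ) → ℝ} (hg : Continuous g)
    (v : Fin N → ℝ) (n : Fin N) {l : ℝ} (hl : 0 ≤ l) :
    ∫ x, (slab a b n l).indicator (fun y => g (update y n b)) (shear v b n x) =
      l * faceIntegral a b n b g := by
  have hT := measurePreserving_shear v b n
  rw [← setIntegral_slab_comp_update hab n hl,
    ← integral_indicator (isCompact_slab n l).measurableSet]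
  conv_rhs => rw [← hT.map_eq]
  refine (integral_map hT.measurable.aemeasurable ?_).symm
  exact hT.map_eq.symm ▸ (integrable_indicator_slab hg n l b).aestronglyMeasurable

/-- Every point of the support of `g` leaves the box through an upper face within time `δ` when it
moves with velocity `v`, so the integral of `g` is at most `δ` times its outward flux. -/
lemma setIntegral_box_le_flux (hab : a < b) {g : (Fin N → ℝ) → ℝ} (hg : Continuous g)
    (hg0 : 0 ≤ g) {v : Fin N → ℝ} (hv : ∀ n, 0 < v n) {δ : ℝ} (hδ : 0 ≤ δ)
    (hmono : ∀ x, ∀ t : ℝ, 0 ≤ t → g x ≤ g (x + t • v))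
    (hsupp : ∀ x ∈ box a b, x + δ • v ∈ box a b → g x = 0) :
    ∫ x in box a b, g x ≤ δ * ∑ n, v n * faceIntegral a b n b g := by
  set F : Fin N → (Fin N → ℝ) → ℝ := fun n x =>
    (slab a b n (δ * v n)).indicator (fun y => g (update y n b)) (shear v b n x) with hF
  have hF0 (n x) : 0 ≤ F n x := indicator_nonneg (fun y _ => hg0 _) _
  have hFint (n) : Integrable (F n) :=
    (measurePreserving_shear v b n).integrable_comp_of_integrable (integrable_indicator_slab hg ..)
  have hle (x) (hx : x ∈ box a b) : g x ≤ ∑ n, F n x := by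
    by_cases hxδ : x + δ • v ∈ box a b
    · exact (hsupp x hx hxδ).trans_le (Finset.sum_nonneg fun n _ => hF0 n x)
    obtain ⟨n, hn⟩ := exists_shear_mem_slab hv hδ hx hxδ
    calc g x ≤ g (x + ((b - x n) / v n) • v) :=
          hmono x _ (div_nonneg (sub_nonneg.2 (mem_box.1 hx n).2) (hv n).le)
      _ = F n x := by simp only [hF, indicator_of_mem hn, update_shear v b (hv n).ne']
      _ ≤ ∑ n, F n x := Finset.single_le_sum (fun n _ => hF0 n x) (Finset.mem_univ n)
  calc ∫ x in box a b, g x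
      ≤ ∫ x in box a b, ∑ n, F n x :=
        setIntegral_mono_on (hg.continuousOn.integrableOn_compact isCompact_box)
          (integrable_finsetSum _ fun n _ => hFint n).integrableOn measurableSet_box hle
    _ ≤ ∫ x, ∑ n, F n x :=
        setIntegral_le_integral (integrable_finsetSum _ fun n _ => hFint n)
          (ae_of_all _ fun x => Finset.sum_nonneg fun n _ => hF0 n x)
    _ = ∑ n, δ * v n * faceIntegral a b n b g := by
        rw [integral_finsetSum _ fun n _ => hFint n]
        exact Finset.sum_congr rfl fun n _ =>
          integral_indicator_slab_comp_shear hab hg v n (mul_nonneg hδ (hv n).le)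
    _ = δ * ∑ n, v n * faceIntegral a b n b g := by simp only [Finset.mul_sum, mul_assoc]

end Box

section Density

variable {a b : ℝ} {f : (Fin N → ℝ) → ℝ}

lemma DensityHyp.continuousOn (hf : DensityHyp a b f) : ContinuousOn f (box a b) := hf.2.2.1

lemma DensityHyp.contDiffOn (hf : DensityHyp a b f) : ContDiffOn ℝ 1 f (interior (box a b)) :=
  hf.2.2.2.1

lemma DensityHyp.pos_of_mem_frontier (hf : DensityHyp a b f) {x : Fin N → ℝ}
    (hx : x ∈ frontier (box a b)) : 0 < f x :=
  hf.2.2.2.2.1 x hx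

lemma DensityHyp.exists_abs_phi_le (hf : DensityHyp a b f) :
    ∃ M, ∀ x ∈ interior (box a b), |phi f x| ≤ M :=
  hf.2.2.2.2.2

lemma DensityHyp.continuousOn_mul (hf : DensityHyp a b f) {g : (Fin N → ℝ) → ℝ}
    (hg : Continuous g) : ContinuousOn (fun x => g x * f x) (box a b) :=
  hg.continuousOn.mul hf.continuousOn

lemma DensityHyp.continuousOn_phi (hf : DensityHyp a b f) :
    ContinuousOn (phi f) (interior (box a b)) := by
  have hfderiv := hf.contDiffOn.continuousOn_fderiv_of_isOpen isOpen_interior le_rfl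
  refine .add (continuousOn_finsetSum _ fun n _ => ?_)
    (continuousOn_const.mul (hf.continuousOn.mono interior_subset))
  exact (continuous_apply n).continuousOn.mul (hfderiv.clm_apply continuousOn_const)

lemma DensityHyp.integrableOn_mul_phi (hf : DensityHyp a b f) {g : (Fin N → ℝ) → ℝ}
    (hg : Continuous g) : IntegrableOn (fun x => g x * phi f x) (box a b) := by
  obtain ⟨M, hM⟩ := hf.exists_abs_phi_le
  have hgi : IntegrableOn g (box a b) := hg.continuousOn.integrableOn_compact isCompact_box
  rw [IntegrableOn, ← restrict_interior_box] at hgi ⊢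
  exact hgi.mul_bdd (c := M)
    (hf.continuousOn_phi.aestronglyMeasurable isOpen_interior.measurableSet)
    ((ae_restrict_mem isOpen_interior.measurableSet).mono hM)

lemma DensityHyp.exists_setIntegral_mul_phi_le (hf : DensityHyp a b f) :
    ∃ M, 0 ≤ M ∧ ∀ g : (Fin N → ℝ) → ℝ, Continuous g → 0 ≤ g →
      ∫ x in box a b, g x * phi f x ≤ M * ∫ x in box a b, g x := by
  obtain ⟨M, hM⟩ := hf.exists_abs_phi_le
  refine ⟨|M|, abs_nonneg M, fun g hg hg0 => ?_⟩
  rw [← integral_const_mul]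
  refine integral_mono_ae (hf.integrableOn_mul_phi hg)
    ((hg.continuousOn.integrableOn_compact isCompact_box).const_mul _) ?_
  rw [← restrict_interior_box]
  filter_upwards [ae_restrict_mem isOpen_interior.measurableSet] with x hx
  rw [mul_comm]
  exact mul_le_mul_of_nonneg_right
    ((le_abs_self _).trans ((hM x hx).trans (le_abs_self M))) (hg0 x)

lemma DensityHyp.exists_pos_le_of_mem_upper_face (hf : DensityHyp a b f) :
    ∃ c : ℝ, 0 < c ∧ ∀ x ∈ box a b, ∀ n, x n = b → c ≤ f x := by
  have hsub : frontier (box a b : Set (Fin N → ℝ)) ⊆ box a b :=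
    isCompact_box.isClosed.frontier_subset
  obtain ⟨c, hc, hle⟩ := (isCompact_box.of_isClosed_subset isClosed_frontier
    hsub).exists_forall_le' (hf.continuousOn.mono hsub) fun x => hf.pos_of_mem_frontier
  exact ⟨c, hc, fun x hx n hn => hle x (mem_frontier_box_of_eq_right hx hn)⟩

/-- The integral `∫ g dμ` against the transformed measure of the density `f` on `[0,b]^N`. The lower
faces `x n = 0` carry weight zero. -/
def transformedIntegral (b : ℝ) (f g : (Fin N → ℝ) → ℝ) : ℝ :=
  (∑ n, b * faceIntegral 0 b n b fun x => g x * f x) - ∫ x in box 0 b, g x * phi f x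

lemma TR_eq_transformedIntegral (b : ℝ) (f : (Fin N → ℝ) → ℝ) (Q : Set (Fin N → ℝ))
    (p : (Fin N → ℝ) → ℝ) : TR 0 b f Q p = transformedIntegral b f (indirect Q p) := by
  simp only [TR, transformedIntegral, faceIntegral, zero_mul, sub_zero, mul_left_comm]

lemma DensityHyp.transformedIntegral_add (hf : DensityHyp 0 b f) (hb : 0 ≤ b)
    {g h : (Fin N → ℝ) → ℝ} (hg : Continuous g) (hh : Continuous h) :
    transformedIntegral b f (fun x => g x + h x) =
      transformedIntegral b f g + transformedIntegral b f h := by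
  have hface (n : Fin N) := faceIntegral_add (hf.continuousOn_mul hg) (hf.continuousOn_mul hh) n
    (right_mem_Icc.2 hb)
  simp only [transformedIntegral, add_mul, hface,
    integral_add (hf.integrableOn_mul_phi hg) (hf.integrableOn_mul_phi hh), mul_add,
    Finset.sum_add_distrib]
  ring

lemma DensityHyp.exists_le_transformedIntegral (hf : DensityHyp 0 b f) (hb : 0 < b) :
    ∃ c M : ℝ, 0 < c ∧ 0 ≤ M ∧ ∀ g : (Fin N → ℝ) → ℝ, Continuous g → 0 ≤ g →
      c * ∑ n, faceIntegral 0 b n b g - M * ∫ x in box 0 b, g x ≤ transformedIntegral b f g := by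
  obtain ⟨M, hM, hloss⟩ := hf.exists_setIntegral_mul_phi_le
  obtain ⟨c, hc, hcf⟩ := hf.exists_pos_le_of_mem_upper_face
  refine ⟨b * c, M, mul_pos hb hc, hM, fun g hg hg0 => sub_le_sub ?_ (hloss g hg hg0)⟩
  rw [Finset.mul_sum]
  refine Finset.sum_le_sum fun n _ => ?_
  rw [mul_assoc]
  refine mul_le_mul_of_nonneg_left ?_ hb.le
  rw [faceIntegral, mul_left_comm, ← integral_const_mul]
  refine faceIntegral_mono (g := fun x => c * g x) (continuous_const.mul hg).continuousOn
    (hf.continuousOn_mul hg) n (right_mem_Icc.2 hb.le) fun x hx hn => ?_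
  rw [mul_comm]
  exact mul_le_mul_of_nonneg_left (hcf x hx n hn) (hg0 x)

/-- In a thin layer below the upper faces the boundary part of the transformed measure outweighs its
interior part. -/
lemma DensityHyp.exists_transformedIntegral_pos (hf : DensityHyp 0 b f) (hb : 0 < b)
    {v : Fin N → ℝ} (hv : ∀ n, 0 < v n) :
    ∃ δ : ℝ, 0 < δ ∧ ∀ g : (Fin N → ℝ) → ℝ, Continuous g → 0 ≤ g →
      (∀ x, ∀ t : ℝ, 0 ≤ t → g x ≤ g (x + t • v)) →
      (∀ x ∈ box 0 b, x + δ • v ∈ box 0 b → g x = 0) →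
      (∃ x ∈ box 0 b, 0 < g x) → 0 < transformedIntegral b f g := by
  obtain ⟨c, M, hc, hM, hbound⟩ := hf.exists_le_transformedIntegral hb
  obtain ⟨δ, hδ, hδc⟩ : ∃ δ : ℝ, 0 < δ ∧ δ * (M * ‖v‖) < c := by
    have hden : 0 < M * ‖v‖ + 1 := by positivity
    refine ⟨c / (M * ‖v‖ + 1), div_pos hc hden, ?_⟩
    rw [div_mul_eq_mul_div, div_lt_iff₀ hden]
    linarith
  refine ⟨δ, hδ, fun g hg hg0 hmono hsupp ⟨x, hx, hgx⟩ => ?_⟩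
  set S := ∑ n, faceIntegral 0 b n b g with hS
  have hflux : ∫ x in box 0 b, g x ≤ δ * ‖v‖ * S := by
    rw [mul_assoc, hS, Finset.mul_sum]
    refine (setIntegral_box_le_flux hb hg hg0 hv hδ.le hmono hsupp).trans ?_
    gcongr with n
    · exact mul_nonneg (inv_nonneg.2 (sub_pos.2 hb).le)
        (integral_nonneg fun y => hg0 (update y n b))
    · exact (le_abs_self _).trans (norm_le_pi_norm v n)
  have hSpos : 0 < S := pos_of_mul_pos_right
    ((setIntegral_pos_of_convex volume convex_box (nonempty_interior_box hb) isCompact_box hg hg0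
      hx hgx).trans_le hflux) (by positivity)
  calc 0 < (c - δ * (M * ‖v‖)) * S := mul_pos (sub_pos.2 hδc) hSpos
    _ = c * S - M * (δ * ‖v‖ * S) := by ring
    _ ≤ c * S - M * ∫ x in box 0 b, g x := by gcongr
    _ ≤ transformedIntegral b f g := hbound g hg hg0

lemma muF_ne_zero_of_mem_nhdsWithin {s D : Set (Fin N → ℝ)} (hs : Convex ℝ s)
    (hs' : (interior s).Nonempty) (hsm : MeasurableSet s) {z : Fin N → ℝ} (hz : z ∈ s)
    (hfs : ContinuousWithinAt f s z) (hfz : 0 < f z) (hD : D ∈ 𝓝[s] z) : muF f D ≠ 0 := by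
  have hlarge : {x | f z / 2 < f x} ∈ 𝓝[s] z := hfs.eventually (lt_mem_nhds (half_lt_self hfz))
  obtain ⟨U, hU, hzU, hUD⟩ := mem_nhdsWithin.1 (inter_mem hlarge hD)
  have hvol := measure_inter_pos_of_mem_nhds_of_convex volume hs hs' hz (hU.mem_nhds hzU)
  have hmeas := hU.measurableSet.inter hsm
  refine ne_of_gt ?_
  calc 0 < ENNReal.ofReal (f z / 2) * volume (U ∩ s) :=
        ENNReal.mul_pos (ENNReal.ofReal_pos.2 (half_pos hfz)).ne' hvol.ne'
    _ = ∫⁻ _ in U ∩ s, ENNReal.ofReal (f z / 2) := (setLIntegral_const _ _).symm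
    _ ≤ ∫⁻ x in U ∩ s, ENNReal.ofReal (f x) :=
        setLIntegral_mono' hmeas fun x hx => ENNReal.ofReal_le_ofReal (hUD hx).1.le
    _ = muF f (U ∩ s) := (withDensity_apply _ hmeas).symm
    _ ≤ muF f D := measure_mono fun x hx => (hUD hx).2

end Density

section Utility

variable {Q : Set (Fin N → ℝ)} {p : (Fin N → ℝ) → ℝ} {q : Fin N → ℝ}

lemma dot_add_smul (x v q : Fin N → ℝ) (t : ℝ) : dot (x + t • v) q = dot x q + t * dot v q := by
  simp only [dot, Pi.add_apply, Pi.smul_apply, smul_eq_mul, add_mul, Finset.sum_add_distrib,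
    Finset.mul_sum, mul_assoc]

lemma continuous_dot (q : Fin N → ℝ) : Continuous fun x : Fin N → ℝ => dot x q :=
  continuous_finsetSum _ fun n _ => (continuous_apply n).mul continuous_const

lemma dot_le_mul_norm (x q : Fin N → ℝ) : dot x q ≤ N * ‖q‖ * ‖x‖ :=
  calc dot x q ≤ ∑ _ : Fin N, ‖x‖ * ‖q‖ := Finset.sum_le_sum fun n _ =>
        (le_abs_self _).trans <| (abs_mul _ _).trans_le <|
          mul_le_mul (norm_le_pi_norm x n) (norm_le_pi_norm q n) (abs_nonneg _) (norm_nonneg _)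
    _ = N * ‖q‖ * ‖x‖ := by
        rw [Finset.sum_const, Finset.card_univ, Fintype.card_fin, nsmul_eq_mul]
        ring

lemma bddAbove_surplus (hQ : Bornology.IsBounded Q) (hp : BddBelow (p '' Q)) (x : Fin N → ℝ) :
    BddAbove ((fun q => dot x q - p q) '' Q) := by
  obtain ⟨C, hC⟩ := hQ.exists_norm_le
  obtain ⟨m, hm⟩ := hp
  refine ⟨N * C * ‖x‖ - m, forall_mem_image.2 fun q hq => ?_⟩
  calc dot x q - p q ≤ N * ‖q‖ * ‖x‖ - m :=
        sub_le_sub (dot_le_mul_norm x q) (hm (mem_image_of_mem p hq))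
    _ ≤ N * C * ‖x‖ - m := by gcongr; exact hC q hq

lemma isLUB_indirect (hQ : Bornology.IsBounded Q) (hp : BddBelow (p '' Q)) (hne : Q.Nonempty)
    (x : Fin N → ℝ) : IsLUB ((fun q => dot x q - p q) '' Q) (indirect Q p x) :=
  isLUB_csSup (hne.image _) (bddAbove_surplus hQ hp x)

lemma le_indirect (hQ : Bornology.IsBounded Q) (hp : BddBelow (p '' Q)) (hq : q ∈ Q)
    (x : Fin N → ℝ) : dot x q - p q ≤ indirect Q p x :=
  le_csSup (bddAbove_surplus hQ hp x) (mem_image_of_mem _ hq)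

lemma continuous_indirect (hQ : Bornology.IsBounded Q) (hp : BddBelow (p '' Q))
    (hne : Q.Nonempty) : Continuous (indirect Q p) := by
  obtain ⟨C, hC⟩ := hQ.exists_norm_le
  refine (LipschitzWith.of_le_add_mul' (N * C) fun x y => ?_).continuous
  refine (isLUB_indirect hQ hp hne x).2 (forall_mem_image.2 fun q hq => ?_)
  have hdiff : dot x q = dot y q + dot (x - y) q := by
    simpa only [one_smul, one_mul, add_sub_cancel] using dot_add_smul y (x - y) q 1
  have hbound : dot (x - y) q ≤ N * C * dist x y := by
    rw [dist_eq_norm]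
    exact (dot_le_mul_norm _ _).trans (by gcongr; exact hC q hq)
  linarith [le_indirect hQ hp hq y]

/-- The reservation price of the bundle `q` for the type `x`: the highest price of `q` at which `x`
would still buy it when the other bundles are priced by `p`. Its supremum over the type space is the
envelope of `p` at `q`. -/
def reservationPrice (Q : Set (Fin N → ℝ)) (p : (Fin N → ℝ) → ℝ) (q x : Fin N → ℝ) : ℝ :=
  dot x q - indirect Q p x

lemma reservationPrice_le_price (hQ : Bornology.IsBounded Q) (hp : BddBelow (p '' Q)) (hq : q ∈ Q)
    (x : Fin N → ℝ) : reservationPrice Q p q x ≤ p q :=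
  sub_le_comm.1 (le_indirect hQ hp hq x)

lemma continuous_reservationPrice (hQ : Bornology.IsBounded Q) (hp : BddBelow (p '' Q))
    (hne : Q.Nonempty) (q : Fin N → ℝ) : Continuous (reservationPrice Q p q) :=
  (continuous_dot q).sub (continuous_indirect hQ hp hne)

lemma isGreatest_envelope {X : Set (Fin N → ℝ)} (hX : IsCompact X) (hX' : X.Nonempty)
    (hQ : Bornology.IsBounded Q) (hp : BddBelow (p '' Q)) (hne : Q.Nonempty) (q : Fin N → ℝ) :
    IsGreatest (reservationPrice Q p q '' X) (envelope X Q p q) :=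
  (hX.image (continuous_reservationPrice hQ hp hne q)).isGreatest_sSup (hX'.image _)

lemma mem_demandSet_of_reservationPrice_eq {X : Set (Fin N → ℝ)} (hX : IsCompact X)
    (hQ : Bornology.IsBounded Q) (hp : BddBelow (p '' Q)) (hne : Q.Nonempty) {x : Fin N → ℝ}
    (hx : x ∈ X) (h : reservationPrice Q p q x = envelope X Q p q) : x ∈ demandSet X Q p q := by
  refine ⟨hx, fun q' _ => ?_⟩
  have hle : reservationPrice Q p q' x ≤ envelope X Q p q' :=
    (isGreatest_envelope hX ⟨x, hx⟩ hQ hp hne q').2 (mem_image_of_mem _ hx)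
  unfold reservationPrice at h hle
  linarith

lemma Feasible.update {c : ℝ} (hp : Feasible Q p) (hq : q ≠ 0) : Feasible Q (update p q c) := by
  refine ⟨(hp.1.insert c).mono (image_subset_iff.2 fun q' hq' => ?_), ?_⟩
  · rcases eq_or_ne q' q with rfl | hne
    · exact .inl (update_self ..)
    · exact .inr ⟨q', hq', (update_of_ne hne ..).symm⟩
  · rw [update_of_ne hq.symm, hp.2]

lemma indirect_update_price (hQ : Bornology.IsBounded Q) (hp : BddBelow (p '' Q)) (hq : q ∈ Q)
    {c : ℝ} (hc : c ≤ p q) (x : Fin N → ℝ) :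
    indirect Q (update p q c) x = indirect Q p x + max 0 (reservationPrice Q p q x - c) := by
  have hlub : IsLUB ((fun q' => dot x q' - update p q c q') '' Q)
      (max (indirect Q p x) (dot x q - c)) := by
    refine ⟨forall_mem_image.2 fun q' hq' => ?_, fun u hu => max_le ?_ ?_⟩
    · rcases eq_or_ne q' q with rfl | hne
      · simp only [update_self, le_max_right]
      · simp only [update_of_ne hne]
        exact (le_indirect hQ hp hq' x).trans (le_max_left ..)
    · refine (isLUB_indirect hQ hp ⟨q, hq⟩ x).2 (forall_mem_image.2 fun q' hq' => ?_)
      have hle : update p q c q' ≤ p q' := update_le_self_iff.2 hc q'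
      exact (sub_le_sub_left hle _).trans (hu (mem_image_of_mem _ hq'))
    · simpa only [update_self] using hu (mem_image_of_mem _ hq)
  rw [indirect, hlub.csSup_eq (Nonempty.image _ ⟨q, hq⟩), ← max_add_add_left, add_zero,
    reservationPrice]
  ring_nf

end Utility

section NormalCone

variable {Q : Set (Fin N → ℝ)} {p : (Fin N → ℝ) → ℝ} {q v : Fin N → ℝ}

/-- The normal cone of `Q` at `q`: the directions in which `q` is a most valuable bundle. -/
def normalCone (Q : Set (Fin N → ℝ)) (q : Fin N → ℝ) : Set (Fin N → ℝ) :=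
  {v | ∀ q' ∈ Q, dot v q' ≤ dot v q}

lemma reservationPrice_le_add_smul (hQ : Bornology.IsBounded Q) (hp : BddBelow (p '' Q))
    (hne : Q.Nonempty) (hv : v ∈ normalCone Q q) {t : ℝ} (ht : 0 ≤ t) (x : Fin N → ℝ) :
    reservationPrice Q p q x ≤ reservationPrice Q p q (x + t • v) := by
  have hle : indirect Q p (x + t • v) ≤ indirect Q p x + t * dot v q := by
    refine (isLUB_indirect hQ hp hne _).2 (forall_mem_image.2 fun q' hq' => ?_)
    rw [dot_add_smul]
    linarith [le_indirect hQ hp hq' x, mul_le_mul_of_nonneg_left (hv q' hq') ht]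
  simp only [reservationPrice, dot_add_smul]
  linarith

lemma mem_interior_normalCone_convexHull {s : Set (Fin N → ℝ)} (hs : s.Finite)
    (h : ∀ q' ∈ s, q' ≠ q → dot v q' < dot v q) : v ∈ interior (normalCone (convexHull ℝ s) q) := by
  have hev : ∀ᶠ w in 𝓝 v, ∀ q' ∈ s, dot w q' ≤ dot w q := by
    refine (eventually_all_finite hs).2 fun q' hq' => ?_
    rcases eq_or_ne q' q with rfl | hne
    · exact .of_forall fun w => le_rfl
    · exact ((continuous_dot q').continuousAt.eventually_lt (continuous_dot q).continuousAt
        (h q' hq' hne)).mono fun w => le_of_lt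
  refine mem_interior_iff_mem_nhds.2 (hev.mono fun w hw => ?_)
  have hconv : Convex ℝ {q' | dot w q' ≤ dot w q} :=
    convex_halfSpace_le (dotProductBilin ℝ ℝ w).isLinear _
  exact convexHull_min hw hconv

lemma exists_pos_mem_interior {s : Set (Fin N → ℝ)} (hv : v ∈ interior s) (hv0 : 0 ≤ v) :
    ∃ w ∈ interior s, ∀ n, 0 < w n := by
  have hlim : Tendsto (fun η : ℝ => v + η • (1 : Fin N → ℝ)) (𝓝[>] 0) (𝓝 v) := by
    refine Tendsto.mono_left (Continuous.tendsto' (by fun_prop) _ _ ?_) nhdsWithin_le_nhds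
    rw [zero_smul, add_zero]
  obtain ⟨η, hηs, hη⟩ :=
    ((hlim.eventually_mem (isOpen_interior.mem_nhds hv)).and self_mem_nhdsWithin).exists
  refine ⟨v + η • 1, hηs, fun n => ?_⟩
  simpa using add_pos_of_nonneg_of_pos (hv0 n) hη

end NormalCone

section Pooling

variable {a b : ℝ} {f : (Fin N → ℝ) → ℝ} {Q : Set (Fin N → ℝ)} {p : (Fin N → ℝ) → ℝ}
  {q v : Fin N → ℝ}

/-- The ray from `x` with velocity `v` leaves the box at a point `z` of an upper face, and every
type near `z` lies on a ray from `x` whose velocity is still in the normal cone. -/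
lemma DensityHyp.muF_demandSet_ne_zero_of_reservationPrice_eq [Nonempty (Fin N)]
    (hf : DensityHyp a b f) (hab : a < b) (hQ : Bornology.IsBounded Q) (hp : BddBelow (p '' Q))
    (hne : Q.Nonempty) (hv : v ∈ interior (normalCone Q q)) (hv0 : ∀ n, 0 < v n) {δ : ℝ}
    (hδ : 0 < δ) {x : Fin N → ℝ} (hx : x ∈ box a b) (hxδ : x + δ • v ∈ box a b)
    (henv : reservationPrice Q p q x = envelope (box a b) Q p q) :
    muF f (demandSet (box a b) Q p q) ≠ 0 := by
  obtain ⟨n, hz⟩ := exists_add_smul_mem_upper_face hv0 hx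
  set s := (b - x n) / v n with hs
  have hs0 : 0 < s := by
    have hle := (mem_box.1 hxδ n).2
    simp only [Pi.add_apply, Pi.smul_apply, smul_eq_mul] at hle
    exact hδ.trans_le ((le_div_iff₀ (hv0 n)).2 (by linarith))
  have hzn : (x + s • v) n = b := by
    simp only [Pi.add_apply, Pi.smul_apply, smul_eq_mul, hs, div_mul_cancel₀ _ (hv0 n).ne',
      add_sub_cancel]
  have hvelocity : Tendsto (fun y => s⁻¹ • (y - x)) (𝓝 (x + s • v)) (𝓝 v) := by
    refine Continuous.tendsto' (by fun_prop) _ _ ?_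
    rw [add_sub_cancel_left, inv_smul_smul₀ hs0.ne']
  have hdemand : demandSet (box a b) Q p q ∈ 𝓝[box a b] (x + s • v) := by
    filter_upwards [self_mem_nhdsWithin, mem_nhdsWithin_of_mem_nhds
      (hvelocity (mem_interior_iff_mem_nhds.1 hv))] with y hy hyv
    refine mem_demandSet_of_reservationPrice_eq isCompact_box hQ hp hne hy (le_antisymm
      ((isGreatest_envelope isCompact_box ⟨x, hx⟩ hQ hp hne q).2 (mem_image_of_mem _ hy)) ?_)
    have hle := reservationPrice_le_add_smul (p := p) hQ hp hne hyv hs0.le x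
    rwa [smul_inv_smul₀ hs0.ne', add_sub_cancel, henv] at hle
  exact muF_ne_zero_of_mem_nhdsWithin convex_box (nonempty_interior_box hab) measurableSet_box hz
    (hf.continuousOn _ hz) (hf.pos_of_mem_frontier (mem_frontier_box_of_eq_right hz hzn)) hdemand

lemma DensityHyp.exists_reservationPrice_le_of_muF_demandSet_eq_zero [Nonempty (Fin N)]
    (hf : DensityHyp a b f) (hab : a < b) (hQ : Bornology.IsBounded Q) (hp : BddBelow (p '' Q))
    (hne : Q.Nonempty) (hv : v ∈ interior (normalCone Q q)) (hv0 : ∀ n, 0 < v n) {δ : ℝ}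
    (hδ : 0 < δ) (hnull : muF f (demandSet (box a b) Q p q) = 0) :
    ∃ c < envelope (box a b) Q p q, ∀ x ∈ box a b, x + δ • v ∈ box a b →
      reservationPrice Q p q x ≤ c := by
  have hcompact : IsCompact (box a b ∩ (· + δ • v) ⁻¹' box a b : Set (Fin N → ℝ)) :=
    isCompact_box.inter_right (isCompact_box.isClosed.preimage (continuous_add_const _))
  have hlt : ∀ x ∈ box a b ∩ (· + δ • v) ⁻¹' box a b,
      reservationPrice Q p q x < envelope (box a b) Q p q := fun x hx =>
    ((isGreatest_envelope isCompact_box ⟨x, hx.1⟩ hQ hp hne q).2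
      (mem_image_of_mem _ hx.1)).lt_of_ne fun henv =>
        hf.muF_demandSet_ne_zero_of_reservationPrice_eq hab hQ hp hne hv hv0 hδ hx.1 hx.2 henv hnull
  obtain ⟨c, hc, hle⟩ := IsCompact.exists_forall_le' (α := ℝᵒᵈ) hcompact
    (continuous_reservationPrice hQ hp hne q).continuousOn hlt
  exact ⟨c, hc, fun x hx hxδ => hle x ⟨hx, hxδ⟩⟩

lemma DensityHyp.TR_update_price (hf : DensityHyp 0 b f) (hb : 0 ≤ b)
    (hQ : Bornology.IsBounded Q) (hp : BddBelow (p '' Q)) (hq : q ∈ Q) {c : ℝ} (hc : c ≤ p q) :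
    TR 0 b f Q (update p q c) =
      TR 0 b f Q p + transformedIntegral b f fun x => max 0 (reservationPrice Q p q x - c) := by
  have hbump : Continuous fun x => max 0 (reservationPrice Q p q x - c) :=
    continuous_const.max ((continuous_reservationPrice hQ hp ⟨q, hq⟩ q).sub continuous_const)
  rw [TR_eq_transformedIntegral, TR_eq_transformedIntegral,
    ← hf.transformedIntegral_add hb (continuous_indirect hQ hp ⟨q, hq⟩) hbump,
    funext (indirect_update_price hQ hp hq hc)]

theorem DensityHyp.muF_demandSet_ne_zero_of_optimal (hf : DensityHyp 0 b f) (hb : 0 < b)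
    (hQ : Bornology.IsBounded Q) (hopt : Optimal 0 b f Q p) (hq : q ∈ Q) (hq0 : q ≠ 0)
    (hv : v ∈ interior (normalCone Q q)) (hv0 : 0 ≤ v) :
    muF f (demandSet (box 0 b) Q p q) ≠ 0 := by
  intro hnull
  obtain ⟨w, hw, hw0⟩ := exists_pos_mem_interior hv hv0
  have : Nonempty (Fin N) := ⟨(ne_iff.1 hq0).choose⟩
  have hp : BddBelow (p '' Q) := hopt.1.1
  have hne : Q.Nonempty := ⟨q, hq⟩
  have hr := continuous_reservationPrice hQ hp hne q
  obtain ⟨δ, hδ, hgain⟩ := hf.exists_transformedIntegral_pos hb hw0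
  obtain ⟨c, hc, hlow⟩ := hf.exists_reservationPrice_le_of_muF_demandSet_eq_zero hb hQ hp hne hw hw0
    hδ hnull
  obtain ⟨x, hx, henv⟩ : envelope (box 0 b) Q p q ∈ reservationPrice Q p q '' box 0 b :=
    (isGreatest_envelope isCompact_box ((nonempty_interior_box hb).mono interior_subset)
      hQ hp hne q).1
  have hcp : c ≤ p q := hc.le.trans (henv ▸ reservationPrice_le_price hQ hp hq x)
  have hpos : 0 < transformedIntegral b f fun x => max 0 (reservationPrice Q p q x - c) := by
    refine hgain _ (continuous_const.max (hr.sub continuous_const)) (fun y => le_max_left ..)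
      (fun y t ht => ?_) (fun y hy hyδ => max_eq_left (sub_nonpos.2 (hlow y hy hyδ)))
      ⟨x, hx, lt_max_of_lt_right (sub_pos.2 (henv ▸ hc))⟩
    gcongr
    exact reservationPrice_le_add_smul hQ hp hne (interior_subset hw) ht y
  have hle := hopt.2 _ (hopt.1.update (c := c) hq0)
  rw [hf.TR_update_price hb.le hQ hp hq hcp] at hle
  linarith

end Pooling

section Qk

variable {k : ℝ}

lemma dot_one_const (k : ℝ) : dot 1 (fun _ : Fin N => k) = N * k := by
  simp [dot]

lemma isBounded_Qk : Bornology.IsBounded (Qk N k) :=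
  isBounded_convexHull.2 (((finite_range _).union (finite_singleton _)).insert _).isBounded

lemma single_mem_Qk (n : Fin N) : Pi.single n 1 ∈ Qk N k :=
  subset_convexHull ℝ _ (.inr (.inl ⟨n, rfl⟩))

lemma const_mem_Qk : (fun _ => k) ∈ Qk N k :=
  subset_convexHull ℝ _ (.inr (.inr rfl))

lemma mem_interior_normalCone_Qk {q v : Fin N → ℝ} (hzero : q ≠ 0 → 0 < dot v q)
    (hsingle : ∀ n, q ≠ Pi.single n 1 → v n < dot v q)
    (hconst : q ≠ (fun _ => k) → (∑ n, v n) * k < dot v q) :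
    v ∈ interior (normalCone (Qk N k) q) := by
  refine mem_interior_normalCone_convexHull
    (((finite_range _).union (finite_singleton _)).insert _) ?_
  rintro q' (rfl | ⟨n, rfl⟩ | rfl) hq'
  · simpa [dot] using hzero hq'.symm
  · simpa [dot, Pi.single_apply] using hsingle n hq'.symm
  · simpa [dot, Finset.sum_mul] using hconst hq'.symm

lemma single_mem_interior_normalCone_Qk (hk : k < 1) (n : Fin N) :
    Pi.single n 1 ∈ interior (normalCone (Qk N k) (Pi.single n 1)) := by
  have hdot : dot (Pi.single n 1) (Pi.single n 1 : Fin N → ℝ) = 1 := by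
    simp [dot, Pi.single_apply]
  refine mem_interior_normalCone_Qk (fun _ => ?_) (fun m hm => ?_) fun _ => ?_ <;> rw [hdot]
  · exact one_pos
  · rw [Pi.single_eq_of_ne fun hmn => hm (by rw [hmn])]
    exact one_pos
  · simpa using hk

lemma one_mem_interior_normalCone_Qk (hk : 1 < N * k) :
    1 ∈ interior (normalCone (Qk N k) fun _ => k) := by
  refine mem_interior_normalCone_Qk (fun _ => ?_) (fun m _ => ?_) fun h => (h rfl).elim <;>
    rw [dot_one_const]
  · exact one_pos.trans hk
  · exact hk

end Qk

theorem pooling_in_substitute_complement_space_general {b : ℝ} (hb : 0 < b) (k : ℝ)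
    (f : (Fin N → ℝ) → ℝ) (hf : DensityHyp 0 b f)
    (p : (Fin N → ℝ) → ℝ) (hopt : Optimal 0 b f (Qk N k) p) :
    (k < 1 → ∀ n : Fin N, muF f (demandSet (box 0 b) (Qk N k) p (Pi.single n 1)) ≠ 0) ∧
    (1 < N * k → muF f (demandSet (box 0 b) (Qk N k) p (fun _ => k)) ≠ 0) := by
  refine ⟨fun hk n => ?_, fun hk => ?_⟩
  · exact hf.muF_demandSet_ne_zero_of_optimal hb isBounded_Qk hopt (single_mem_Qk n) (by simp)
      (single_mem_interior_normalCone_Qk hk n) (Pi.single_nonneg.2 zero_le_one)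
  · have hk0 : (fun _ : Fin N => k) ≠ 0 := fun h => by
      have hzero : (N : ℝ) * k = 0 := by
        rw [← dot_one_const, h]
        exact dotProduct_zero 1
      linarith
    exact hf.muF_demandSet_ne_zero_of_optimal hb isBounded_Qk hopt const_mem_Qk hk0
      (one_mem_interior_normalCone_Qk hk) zero_le_one

/-- Corollary 9: with `X = [0,1]^N` and
`𝒬 = conv{0, e₁, …, e_N, k·𝟙}`, at any optimal feasible price schedule:
(1) if `1/N ≤ k < 1` then every `e_n` is pooling;
(2) if `k > 1/N` then `k·𝟙` is pooling. -/
theorem pooling_in_substitute_complement_space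
    (hN : 0 < N) (k : ℝ) (hk : 0 < k)
    (f : (Fin N → ℝ) → ℝ) (hf : DensityHyp 0 1 f)
    (p : (Fin N → ℝ) → ℝ) (hopt : Optimal 0 1 f (Qk N k) p) :
    ((1 / (N : ℝ) ≤ k ∧ k < 1) →
      ∀ n : Fin N, muF f (demandSet (box 0 1) (Qk N k) p (Pi.single n 1)) ≠ 0) ∧
    (1 / (N : ℝ) < k →
      muF f (demandSet (box 0 1) (Qk N k) p (fun _ => k)) ≠ 0) := by
  obtain ⟨h₁, h₂⟩ := pooling_in_substitute_complement_space_general one_pos k f hf p hopt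
  exact ⟨fun hk => h₁ hk.2, fun hk => h₂ ((div_lt_iff₀' (Nat.cast_pos.2 hN)).1 hk)⟩

end Stmt14
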